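/- For every fixed even integer k ≥ 4, the liminf as s tends to infinity of FP(s,k)/s is at least 1/H(1/k), where H is the binary entropy function. -/

import Mathlib

/-!
In a functional `k`-PIR code of length `n`, the smallest of the `k` disjoint recovery sets of a
vector `v` has at most `n / k` elements, and `v` is determined by it. So `2 ^ s` is at most the
number of subsets of `Fin n` of size at most `n / k`, i.e. the volume of a Hamming ball of relative
radius `p = 1 / k ≤ 1 / 2`, which is at most `2 ^ (n * binEnt p)`: under the product
Bernoulli(`p`) measure each such subset has mass at least `2 ^ (-n * binEnt p)`
(`two_rpow_neg_binEnt_le`). Hence `s ≤ n * binEnt (1 / k)` (`IsFunctionalPIR.le_mul_binEnt`).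

Concatenating `k` copies of the identity matrix (`exists_isFunctionalPIR`) shows that the minimum
defining `FP s k` is attained and that `FP s k / s ≤ k`, so the real-valued `liminf` is a genuine
one.
-/

open scoped BigOperators

/-- `G` is a functional `k`-PIR code of dimension `s` and length `n`: for every nonzero
request `v : F_2^s` there are `k` pairwise disjoint sets of column indices, each of whose
columns sum to `v`. -/
def IsFunctionalPIR (s n k : ℕ) (G : Matrix (Fin s) (Fin n) (ZMod 2)) : Prop :=
  ∀ v : Fin s → ZMod 2, v ≠ 0 →
    ∃ R : Fin k → Finset (Fin n),
      (∀ j j' : Fin k, j ≠ j' → Disjoint (R j) (R j')) ∧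
      (∀ j : Fin k, ∀ i : Fin s, ∑ l ∈ R j, G i l = v i)

/-- `G` is a functional `k`-batch code of dimension `s` and length `n`: for every `k`-tuple of
nonzero requests there are `k` pairwise disjoint sets of column indices such that the columns
of the `j`-th set sum to the `j`-th request. -/
def IsFunctionalBatch (s n k : ℕ) (G : Matrix (Fin s) (Fin n) (ZMod 2)) : Prop :=
  ∀ v : Fin k → (Fin s → ZMod 2), (∀ j, v j ≠ 0) →
    ∃ R : Fin k → Finset (Fin n),
      (∀ j j' : Fin k, j ≠ j' → Disjoint (R j) (R j')) ∧
      (∀ j : Fin k, ∀ i : Fin s, ∑ l ∈ R j, G i l = v j i)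

/-- `FP s k` is the minimum length of a functional `k`-PIR code of dimension `s`. -/
noncomputable def FP (s k : ℕ) : ℕ :=
  sInf {n : ℕ | ∃ G : Matrix (Fin s) (Fin n) (ZMod 2), IsFunctionalPIR s n k G}

/-- `FB s k` is the minimum length of a functional `k`-batch code of dimension `s`. -/
noncomputable def FB (s k : ℕ) : ℕ :=
  sInf {n : ℕ | ∃ G : Matrix (Fin s) (Fin n) (ZMod 2), IsFunctionalBatch s n k G}

/-- The binary entropy function `H(p) = -p log₂ p - (1-p) log₂ (1-p)`. -/
noncomputable def binEnt (p : ℝ) : ℝ :=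
  -p * Real.logb 2 p - (1 - p) * Real.logb 2 (1 - p)

/-- `k` side-by-side copies of the identity matrix form a functional `k`-PIR code. -/
lemma exists_isFunctionalPIR (s k : ℕ) :
    ∃ G : Matrix (Fin s) (Fin (k * s)) (ZMod 2), IsFunctionalPIR s (k * s) k G := by
  refine ⟨fun i l => if (finProdFinEquiv.symm l).2 = i then 1 else 0, fun v _ => ?_⟩
  refine ⟨fun j => Finset.univ.filter fun l =>
    (finProdFinEquiv.symm l).1 = j ∧ v (finProdFinEquiv.symm l).2 = 1, ?_, ?_⟩
  · intro j j' hjj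
    rw [Finset.disjoint_left]
    intro l hl hl'
    simp only [Finset.mem_filter] at hl hl'
    exact hjj (hl.2.1.symm.trans hl'.2.1)
  · intro j i
    rw [Finset.sum_filter, ← Equiv.sum_comp finProdFinEquiv]
    simp only [Equiv.symm_apply_apply]
    rw [Fintype.sum_prod_type, Finset.sum_eq_single j, Finset.sum_eq_single i]
    · have h2 : ∀ x : ZMod 2, (if x = 1 then (1 : ZMod 2) else 0) = x := by decide
      simpa using h2 (v i)
    · intro b _ hb
      simp [hb]
    · simp
    · intro b _ hb
      simp [hb]
    · simp

/-- Some recovery set is at most as large as the average: every vector is the sum of at most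
`n / k` columns. -/
lemma IsFunctionalPIR.exists_small {s n k : ℕ} (hk : 0 < k)
    {G : Matrix (Fin s) (Fin n) (ZMod 2)} (hG : IsFunctionalPIR s n k G) (v : Fin s → ZMod 2) :
    ∃ R : Finset (Fin n), k * R.card ≤ n ∧ ∀ i, ∑ l ∈ R, G i l = v i := by
  by_cases hv : v = 0
  · exact ⟨∅, by simp, by simp [hv]⟩
  obtain ⟨R, hdis, hsum⟩ := hG v hv
  have htot : ∑ j, (R j).card ≤ n := by
    rw [← Finset.card_biUnion fun j _ j' _ h => hdis j j' h]
    simpa using Finset.card_le_univ (Finset.univ.biUnion R)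
  obtain ⟨j, hj⟩ : ∃ j, k * (R j).card ≤ n := by
    by_contra! h
    have h1 : ∑ _j : Fin k, n < ∑ j, k * (R j).card :=
      Finset.sum_lt_sum_of_nonempty ⟨⟨0, hk⟩, Finset.mem_univ _⟩ fun j _ => h j
    rw [← Finset.mul_sum] at h1
    simp only [Finset.sum_const, Finset.card_univ, Fintype.card_fin, smul_eq_mul] at h1
    exact absurd (lt_of_mul_lt_mul_left h1 (Nat.zero_le k)) (not_lt.mpr htot)
  exact ⟨R j, hj, hsum j⟩

lemma two_rpow_neg_binEnt_le {p : ℝ} (hp0 : 0 < p) (hp : p ≤ 1 / 2) {n r : ℕ} (hrn : r ≤ n)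
    (hr : (r : ℝ) ≤ p * n) :
    (2 : ℝ) ^ (-(n * binEnt p)) ≤ p ^ r * (1 - p) ^ (n - r) := by
  have hq0 : 0 < 1 - p := by linarith
  have hpos : 0 < p ^ r * (1 - p) ^ (n - r) := by positivity
  rw [← Real.le_logb_iff_rpow_le one_lt_two hpos, Real.logb_mul (by positivity) (by positivity),
    Real.logb_pow, Real.logb_pow, Nat.cast_sub hrn, binEnt]
  have hlog : Real.logb 2 p ≤ Real.logb 2 (1 - p) :=
    Real.logb_le_logb_of_le one_lt_two hp0 (by linarith)
  nlinarith [mul_nonneg (sub_nonneg.2 hr) (sub_nonneg.2 hlog)]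

lemma binEnt_pos {p : ℝ} (hp0 : 0 < p) (hp : p < 1) : 0 < binEnt p := by
  have h1 : Real.logb 2 p < 0 := Real.logb_neg one_lt_two hp0 hp
  have h2 : Real.logb 2 (1 - p) < 0 :=
    Real.logb_neg one_lt_two (by linarith) (by linarith)
  rw [binEnt]
  nlinarith [mul_pos hp0 (neg_pos.2 h1), mul_pos (sub_pos.2 hp) (neg_pos.2 h2)]

lemma IsFunctionalPIR.le_mul_binEnt {s n k : ℕ} (hk : 2 ≤ k)
    {G : Matrix (Fin s) (Fin n) (ZMod 2)} (hG : IsFunctionalPIR s n k G) :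
    (s : ℝ) ≤ n * binEnt (1 / (k : ℝ)) := by
  have hk' : (2 : ℝ) ≤ k := by exact_mod_cast hk
  set p : ℝ := 1 / (k : ℝ) with hpdef
  have hp0 : 0 < p := by positivity
  have hp : p ≤ 1 / 2 := one_div_le_one_div_of_le two_pos hk'
  have hq0 : 0 < 1 - p := by linarith
  choose R hcard hsum using hG.exists_small (by omega)
  have hinj : Function.Injective R := fun v w h => by
    funext i
    rw [← hsum v i, ← hsum w i, h]
  have hmass : ∑ v, p ^ (R v).card * (1 - p) ^ (n - (R v).card) ≤ 1 := by
    calc ∑ v, p ^ (R v).card * (1 - p) ^ (n - (R v).card)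
        = ∑ S ∈ Finset.univ.image R, p ^ S.card * (1 - p) ^ (n - S.card) := by
          rw [Finset.sum_image hinj.injOn]
      _ ≤ ∑ S : Finset (Fin n), p ^ S.card * (1 - p) ^ (n - S.card) :=
          Finset.sum_le_sum_of_subset_of_nonneg (Finset.subset_univ _)
            fun S _ _ => by positivity
      _ = 1 := by
          have h := Fin.sum_pow_mul_eq_add_pow (n := n) p (1 - p)
          rw [h]
          simp
  have hlow : (2 : ℝ) ^ s * (2 : ℝ) ^ (-(n * binEnt p)) ≤ 1 := by
    refine le_trans ?_ hmass
    have h := Finset.card_nsmul_le_sum (Finset.univ : Finset (Fin s → ZMod 2))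
      (fun v => p ^ (R v).card * (1 - p) ^ (n - (R v).card)) ((2 : ℝ) ^ (-(n * binEnt p)))
      (fun v _ => by
        refine two_rpow_neg_binEnt_le hp0 hp (by simpa using Finset.card_le_univ (R v)) ?_
        have h3 : (k : ℝ) * (R v).card ≤ n := by exact_mod_cast hcard v
        rw [hpdef, one_div_mul_eq_div, le_div_iff₀ (by positivity)]
        linarith)
    simpa [Finset.card_univ, ZMod.card] using h
  rw [← Real.rpow_natCast, ← Real.rpow_add two_pos] at hlow
  by_contra! hlt
  exact absurd hlow (not_le.2 (Real.one_lt_rpow one_lt_two (by linarith)))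

theorem FP_liminf_lower (k : ℕ) (hk : 4 ≤ k) (hke : Even k) :
    (1 : ℝ) / binEnt (1 / (k : ℝ)) ≤
      Filter.liminf (fun s : ℕ => (FP s k : ℝ) / (s : ℝ)) Filter.atTop := by
  have hk' : (4 : ℝ) ≤ k := by exact_mod_cast hk
  have hH : 0 < binEnt (1 / (k : ℝ)) := by
    refine binEnt_pos (by positivity) ?_
    rw [div_lt_one (by positivity)]
    linarith
  refine Filter.le_liminf_of_le ?_ ?_
  · refine Filter.IsBoundedUnder.isCoboundedUnder_ge ⟨(k : ℝ), ?_⟩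
    rw [Filter.eventually_map]
    filter_upwards [Filter.eventually_gt_atTop 0] with s hs
    have hs' : (0 : ℝ) < s := by exact_mod_cast hs
    rw [div_le_iff₀ hs']
    exact_mod_cast (Nat.sInf_le (exists_isFunctionalPIR s k) : FP s k ≤ k * s)
  · filter_upwards [Filter.eventually_gt_atTop 0] with s hs
    have hs' : (0 : ℝ) < s := by exact_mod_cast hs
    obtain ⟨G, hG⟩ : ∃ G : Matrix (Fin s) (Fin (FP s k)) (ZMod 2),
        IsFunctionalPIR s (FP s k) k G :=
      Nat.sInf_mem (s := {n | ∃ G : Matrix (Fin s) (Fin n) (ZMod 2), IsFunctionalPIR s n k G})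
        ⟨_, exists_isFunctionalPIR s k⟩
    rw [div_le_div_iff₀ hH hs', one_mul]
    exact hG.le_mul_binEnt (by omega)
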